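/- For every τ in the complex upper half-plane, the values x = c(τ) and y = c(3τ) satisfy g(x,y) = 0, where g(x,y) = x³(4y² + 2y + 1) − y(y² − y + 1); equivalently c(τ)³ = c(3τ)·(1 − c(3τ) + c(3τ)²)/(1 + 2c(3τ) + 4c(3τ)²). -/

import Mathlib

open Complex

/-- The nome `q = exp(2πiτ)`. -/
noncomputable def nome (τ : ℂ) : ℂ := Complex.exp (2 * Real.pi * I * τ)

/-- Ramanujan's cubic continued fraction, as an infinite product:
`c(τ) = q^{1/3} ∏_{n≥1} (1-q^{6n-1})(1-q^{6n-5})/(1-q^{6n-3})²`. -/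
noncomputable def c (τ : ℂ) : ℂ :=
  Complex.exp (2 * Real.pi * I * τ / 3) *
    ∏' n : ℕ,
      ((1 - nome τ ^ (6 * (n + 1) - 1)) * (1 - nome τ ^ (6 * (n + 1) - 5)) /
        (1 - nome τ ^ (6 * (n + 1) - 3)) ^ 2)

open Filter Topology

/-- The finite Euler product `∏_{i=1}^{n} (1 - q ^ i)`. -/
noncomputable def eulerPartial (q : ℂ) (n : ℕ) : ℂ := ∏ i ∈ Finset.range n, (1 - q ^ (i + 1))

/-- The Euler product `∏_{i ≥ 1} (1 - q ^ i)`. -/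
noncomputable def eulerProd (q : ℂ) : ℂ := ∏' i : ℕ, (1 - q ^ (i + 1))

/-- The reciprocal of `eulerPartial`, extended by zero to negative indices. -/
noncomputable def invEulerPartial (q : ℂ) (k : ℤ) : ℂ :=
  if k < 0 then 0 else (eulerPartial q k.toNat)⁻¹

/-- The theta series `∑_{m ∈ ℤ} (-1) ^ m x ^ (m ^ 2)`. -/
noncomputable def alternatingTheta (x : ℂ) : ℂ := ∑' m : ℤ, (-1) ^ m * x ^ (m ^ 2)

lemma one_sub_pow_ne_zero {q : ℂ} (hq : ‖q‖ < 1) {n : ℕ} (hn : n ≠ 0) : 1 - q ^ n ≠ 0 := by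
  intro h
  have h1 : ‖q ^ n‖ = 1 := by rw [← sub_eq_zero.mp h, norm_one]
  rw [norm_pow] at h1
  exact (pow_lt_one₀ (norm_nonneg _) hq hn).ne h1

lemma norm_pow_lt_one {q : ℂ} (hq : ‖q‖ < 1) {n : ℕ} (hn : n ≠ 0) : ‖q ^ n‖ < 1 := by
  rw [norm_pow]
  exact pow_lt_one₀ (norm_nonneg _) hq hn

lemma eulerPartial_ne_zero {q : ℂ} (hq : ‖q‖ < 1) (n : ℕ) : eulerPartial q n ≠ 0 :=
  Finset.prod_ne_zero_iff.mpr fun _ _ => one_sub_pow_ne_zero hq (Nat.succ_ne_zero _)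

lemma tendsto_eulerPartial {q : ℂ} (hq : ‖q‖ < 1) :
    Tendsto (eulerPartial q) atTop (𝓝 (eulerProd q)) :=
  (ModularForm.multipliable_one_sub_pow hq).hasProd.tendsto_prod_nat

lemma summable_norm_neg_pow_affine {q : ℂ} (hq : ‖q‖ < 1) {a : ℕ} (ha : a ≠ 0) (b : ℕ) :
    Summable fun n : ℕ => ‖-q ^ (a * n + b)‖ := by
  have h := (summable_geometric_of_lt_one (norm_nonneg (q ^ a)) (norm_pow_lt_one hq ha)).mul_right
    (‖q‖ ^ b)
  refine h.congr fun n => ?_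
  rw [norm_neg, norm_pow, norm_pow, ← pow_mul, pow_add]

lemma multipliable_one_sub_pow_affine {q : ℂ} (hq : ‖q‖ < 1) {a : ℕ} (ha : a ≠ 0) (b : ℕ) :
    Multipliable fun n : ℕ => 1 - q ^ (a * n + b) := by
  simpa [sub_eq_add_neg] using
    multipliable_one_add_of_summable (summable_norm_neg_pow_affine hq ha b)

lemma tprod_one_sub_pow_affine_ne_zero {q : ℂ} (hq : ‖q‖ < 1) {a b : ℕ} (ha : a ≠ 0)
    (hb : b ≠ 0) : ∏' n : ℕ, (1 - q ^ (a * n + b)) ≠ 0 := by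
  simpa [sub_eq_add_neg] using
    tprod_one_add_ne_zero_of_summable (f := fun n : ℕ => -q ^ (a * n + b))
      (fun n => by
        simpa [sub_eq_add_neg] using one_sub_pow_ne_zero hq (by omega : a * n + b ≠ 0))
      (summable_norm_neg_pow_affine hq ha b)

lemma eulerProd_ne_zero {q : ℂ} (hq : ‖q‖ < 1) : eulerProd q ≠ 0 := by
  simpa [eulerProd] using tprod_one_sub_pow_affine_ne_zero hq one_ne_zero one_ne_zero

lemma invEulerPartial_sub_one {q : ℂ} (hq : ‖q‖ < 1) (k : ℤ) :
    invEulerPartial q (k - 1) = (1 - q ^ k) * invEulerPartial q k := by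
  rcases lt_trichotomy k 0 with hk | rfl | hk
  · simp [invEulerPartial, hk, show k - 1 < 0 by omega]
  · simp [invEulerPartial]
  · obtain ⟨n, rfl⟩ : ∃ n : ℕ, k = n + 1 := ⟨(k - 1).toNat, by omega⟩
    have h1 : ¬ ((n : ℤ) + 1 - 1 < 0) := by omega
    have h2 : ¬ ((n : ℤ) + 1 < 0) := by omega
    have h3 : ((n : ℤ) + 1).toNat = n + 1 := by omega
    have h4 : ((n : ℤ) + 1 - 1).toNat = n := by omega
    have h5 : q ^ ((n : ℤ) + 1) = q ^ (n + 1) := by exact_mod_cast zpow_natCast q (n + 1)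
    rw [invEulerPartial, invEulerPartial, if_neg h1, if_neg h2, h3, h4, h5, eulerPartial,
      eulerPartial, Finset.prod_range_succ]
    have := one_sub_pow_ne_zero hq (Nat.succ_ne_zero n)
    rw [mul_inv, mul_comm, mul_assoc, inv_mul_cancel₀ this, mul_one]

lemma exists_norm_invEulerPartial_le {q : ℂ} (hq : ‖q‖ < 1) :
    ∃ C : ℝ, 0 ≤ C ∧ ∀ k, ‖invEulerPartial q k‖ ≤ C := by
  have h := (tendsto_eulerPartial hq).inv₀ (eulerProd_ne_zero hq)
  obtain ⟨C, hC⟩ := (Metric.isBounded_range_of_tendsto _ h).exists_norm_le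
  have hC0 : 0 ≤ C := (norm_nonneg _).trans (hC _ ⟨0, rfl⟩)
  refine ⟨C, hC0, fun k => ?_⟩
  unfold invEulerPartial
  split_ifs
  · simpa using hC0
  · exact hC _ ⟨k.toNat, rfl⟩

lemma tendsto_invEulerPartial {q : ℂ} (hq : ‖q‖ < 1) :
    Tendsto (invEulerPartial q) atTop (𝓝 (eulerProd q)⁻¹) := by
  have h := ((tendsto_eulerPartial hq).inv₀ (eulerProd_ne_zero hq)).comp
    (tendsto_atTop.mpr fun n => by
      filter_upwards [eventually_ge_atTop (n : ℤ)] with k hk using by omega :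
      Tendsto Int.toNat atTop atTop)
  refine h.congr' ?_
  filter_upwards [eventually_ge_atTop 0] with k hk
  simp [invEulerPartial, not_lt.mpr hk]

/-- The coefficients in the finite form of the Jacobi triple product. -/
noncomputable def tripleCoeff (q : ℂ) (N : ℕ) (m : ℤ) : ℂ :=
  eulerPartial q (2 * N) * (invEulerPartial q (N - m) * invEulerPartial q (N + m))

lemma tripleCoeff_succ {q : ℂ} (hq0 : q ≠ 0) (hq : ‖q‖ < 1) (N : ℕ) (m : ℤ) :
    tripleCoeff q (N + 1) m = (1 + q ^ (2 * N + 1 : ℤ)) * tripleCoeff q N m +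
      q ^ (N + 1 - m : ℤ) * tripleCoeff q N (m - 1) +
      q ^ (N + 1 + m : ℤ) * tripleCoeff q N (m + 1) := by
  have hu := invEulerPartial_sub_one hq (N + 1 - m)
  have hu' := invEulerPartial_sub_one hq (N + 1 - m - 1)
  have hv := invEulerPartial_sub_one hq (N + 1 + m)
  have hv' := invEulerPartial_sub_one hq (N + 1 + m - 1)
  have hab : q ^ (2 * N + 1 : ℤ) = q ^ (N + 1 - m : ℤ) * q ^ (N + 1 + m : ℤ) * q⁻¹ := by
    rw [← zpow_add₀ hq0, ← zpow_sub_one₀ hq0]; congr 1; ring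
  have hab2 : q ^ (2 * N + 2 : ℤ) = q ^ (N + 1 - m : ℤ) * q ^ (N + 1 + m : ℤ) := by
    rw [← zpow_add₀ hq0]; congr 1; ring
  have hE : eulerPartial q (2 * (N + 1)) =
      eulerPartial q (2 * N) * (1 - q ^ (2 * N + 1 : ℤ)) * (1 - q ^ (2 * N + 2 : ℤ)) := by
    rw [eulerPartial, show 2 * (N + 1) = 2 * N + 1 + 1 by ring, Finset.prod_range_succ,
      Finset.prod_range_succ, ← eulerPartial]
    norm_cast
  rw [zpow_sub_one₀ hq0] at hu' hv'
  simp only [tripleCoeff, hE, hab, hab2]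
  rw [show (N : ℤ) - m = N + 1 - m - 1 by ring, show (N : ℤ) + m = N + 1 + m - 1 by ring,
    show (N : ℤ) - (m - 1) = N + 1 - m by ring,
    show (N : ℤ) + (m - 1) = N + 1 + m - 1 - 1 by ring,
    show (N : ℤ) - (m + 1) = N + 1 - m - 1 - 1 by ring,
    show (N : ℤ) + (m + 1) = N + 1 + m by ring,
    show ((N + 1 : ℕ) : ℤ) - m = N + 1 - m by push_cast; ring,
    show ((N + 1 : ℕ) : ℤ) + m = N + 1 + m by push_cast; ring, hu', hv', hu, hv]
  ring

/-- The finite form of the Jacobi triple product. -/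
lemma hasSum_finite_tripleProduct {Q z : ℂ} (hQ0 : Q ≠ 0) (hQ : ‖Q‖ < 1) (hz : z ≠ 0) (N : ℕ) :
    HasSum (fun m : ℤ => z ^ m * Q ^ (m ^ 2) * tripleCoeff (Q ^ 2) N m)
      (∏ n ∈ Finset.range N, ((1 + z * Q ^ (2 * n + 1)) * (1 + z⁻¹ * Q ^ (2 * n + 1)))) := by
  induction N with
  | zero =>
    have h : ∀ m : ℤ, m ≠ 0 → z ^ m * Q ^ (m ^ 2) * tripleCoeff (Q ^ 2) 0 m = 0 := by
      intro m hm
      rcases lt_or_gt_of_ne hm with h | h <;> simp [tripleCoeff, invEulerPartial, h]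
    simpa [tripleCoeff, invEulerPartial, eulerPartial] using hasSum_single 0 h
  | succ N ih =>
    rw [Finset.prod_range_succ]
    generalize ∏ n ∈ Finset.range N, ((1 + z * Q ^ (2 * n + 1)) * (1 + z⁻¹ * Q ^ (2 * n + 1))) = P
      at ih ⊢
    have hq0 : Q ^ 2 ≠ 0 := pow_ne_zero 2 hQ0
    have h1 := ih.mul_left (1 + (Q ^ 2) ^ (2 * N + 1 : ℤ))
    have h2 := ((Equiv.subRight (1 : ℤ)).hasSum_iff.mpr ih).mul_left (z * Q ^ (2 * N + 1))
    have h3 := ((Equiv.addRight (1 : ℤ)).hasSum_iff.mpr ih).mul_left (z⁻¹ * Q ^ (2 * N + 1))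
    have e : (Q ^ 2) ^ (2 * N + 1 : ℤ) = Q ^ (2 * N + 1) * Q ^ (2 * N + 1) := by
      norm_cast; ring
    have hval : P * ((1 + z * Q ^ (2 * N + 1)) * (1 + z⁻¹ * Q ^ (2 * N + 1))) =
        (1 + (Q ^ 2) ^ (2 * N + 1 : ℤ)) * P + z * Q ^ (2 * N + 1) * P +
          z⁻¹ * Q ^ (2 * N + 1) * P := by
      rw [e]
      linear_combination P * Q ^ (2 * N + 1) * Q ^ (2 * N + 1) * mul_inv_cancel₀ hz
    rw [hval]
    refine ((h1.add h2).add h3).congr_fun fun m => ?_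
    rw [tripleCoeff_succ hq0 (norm_pow_lt_one hQ two_ne_zero)]
    have e1 : z * z ^ (m - 1) = z ^ m := by rw [← zpow_one_add₀ hz]; congr 1; ring
    have e2 : z⁻¹ * z ^ (m + 1) = z ^ m := by
      rw [zpow_add_one₀ hz]; field_simp
    have e3 : Q ^ (m ^ 2) * (Q ^ 2) ^ (N + 1 - m : ℤ) = Q ^ (2 * N + 1) * Q ^ ((m - 1) ^ 2) := by
      rw [← zpow_natCast Q (2 * N + 1), ← zpow_natCast Q 2, ← zpow_mul, ← zpow_add₀ hQ0,
        ← zpow_add₀ hQ0]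
      congr 1; push_cast; ring
    have e4 : Q ^ (m ^ 2) * (Q ^ 2) ^ (N + 1 + m : ℤ) = Q ^ (2 * N + 1) * Q ^ ((m + 1) ^ 2) := by
      rw [← zpow_natCast Q (2 * N + 1), ← zpow_natCast Q 2, ← zpow_mul, ← zpow_add₀ hQ0,
        ← zpow_add₀ hQ0]
      congr 1; push_cast; ring
    simp only [Function.comp_apply, Equiv.subRight_apply, Equiv.coe_addRight]
    linear_combination (z ^ m * tripleCoeff (Q ^ 2) N (m - 1)) * e3 +
      (z ^ m * tripleCoeff (Q ^ 2) N (m + 1)) * e4 -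
      (Q ^ (2 * N + 1) * Q ^ ((m - 1) ^ 2) * tripleCoeff (Q ^ 2) N (m - 1)) * e1 -
      (Q ^ (2 * N + 1) * Q ^ ((m + 1) ^ 2) * tripleCoeff (Q ^ 2) N (m + 1)) * e2

lemma summable_zpow_mul_zpow_sq {Q z : ℂ} (hQ0 : Q ≠ 0) (hQ : ‖Q‖ < 1) (hz : z ≠ 0) :
    Summable fun m : ℤ => z ^ m * Q ^ (m ^ 2) := by
  have hpi : (Real.pi : ℂ) ≠ 0 := by exact_mod_cast Real.pi_ne_zero
  have him : 0 < (Complex.log Q / (Real.pi * I)).im := by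
    have : Complex.log Q / (Real.pi * I) = ((1 / Real.pi : ℝ) : ℂ) * (-I * Complex.log Q) := by
      push_cast; field_simp; rw [I_sq]; ring
    rw [this, Complex.im_ofReal_mul]
    have h : (-I * Complex.log Q).im = - Real.log ‖Q‖ := by simp [Complex.log_re]
    rw [h]
    have := Real.log_neg (norm_pos_iff.mpr hQ0) hQ
    have := Real.pi_pos
    apply mul_pos (by positivity); linarith
  refine ((summable_jacobiTheta₂_term_iff (Complex.log z / (2 * Real.pi * I)) _).mpr him).congr
    fun m => ?_
  rw [jacobiTheta₂_term, Complex.exp_add]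
  congr 1
  · rw [show 2 * Real.pi * I * m * (Complex.log z / (2 * Real.pi * I)) = m * Complex.log z by
      field_simp, Complex.exp_int_mul, Complex.exp_log hz]
  · rw [show Real.pi * I * (m : ℂ) ^ 2 * (Complex.log Q / (Real.pi * I)) =
      ((m ^ 2 : ℤ) : ℂ) * Complex.log Q by push_cast; field_simp,
      Complex.exp_int_mul, Complex.exp_log hQ0]

/-- The Jacobi triple product identity. -/
lemma tendsto_tripleProduct {Q z : ℂ} (hQ0 : Q ≠ 0) (hQ : ‖Q‖ < 1) (hz : z ≠ 0) :
    Tendsto (fun N => ∏ n ∈ Finset.range N,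
      ((1 + z * Q ^ (2 * n + 1)) * (1 + z⁻¹ * Q ^ (2 * n + 1)))) atTop
      (𝓝 ((∑' m : ℤ, z ^ m * Q ^ (m ^ 2)) * (eulerProd (Q ^ 2))⁻¹)) := by
  have hq := norm_pow_lt_one hQ two_ne_zero
  have hE := eulerProd_ne_zero hq
  obtain ⟨C, hC0, hC⟩ := exists_norm_invEulerPartial_le hq
  obtain ⟨D, hD⟩ :=
    (Metric.isBounded_range_of_tendsto _ (tendsto_eulerPartial hq)).exists_norm_le
  have hD0 : 0 ≤ D := (norm_nonneg _).trans (hD _ ⟨0, rfl⟩)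
  have hlim : ∀ m : ℤ, Tendsto (fun N => z ^ m * Q ^ (m ^ 2) * tripleCoeff (Q ^ 2) N m) atTop
      (𝓝 (z ^ m * Q ^ (m ^ 2) * (eulerProd (Q ^ 2))⁻¹)) := by
    intro m
    apply Tendsto.const_mul
    have h1 : Tendsto (fun N : ℕ => 2 * N) atTop atTop :=
      tendsto_id.const_mul_atTop' two_pos
    have h2 : Tendsto (fun N : ℕ => (N : ℤ) - m) atTop atTop :=
      tendsto_atTop_add_const_right _ (-m) tendsto_natCast_atTop_atTop
    have h3 : Tendsto (fun N : ℕ => (N : ℤ) + m) atTop atTop :=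
      tendsto_atTop_add_const_right _ m tendsto_natCast_atTop_atTop
    have h := ((tendsto_eulerPartial hq).comp h1).mul
      (((tendsto_invEulerPartial hq).comp h2).mul ((tendsto_invEulerPartial hq).comp h3))
    rwa [mul_inv_cancel_left₀ hE] at h
  have hb : ∀ᶠ N in atTop, ∀ m : ℤ, ‖z ^ m * Q ^ (m ^ 2) * tripleCoeff (Q ^ 2) N m‖ ≤
      ‖z ^ m * Q ^ (m ^ 2)‖ * (D * (C * C)) := by
    refine .of_forall fun N m => ?_
    rw [norm_mul]
    refine mul_le_mul_of_nonneg_left ?_ (norm_nonneg _)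
    rw [tripleCoeff, norm_mul, norm_mul]
    exact mul_le_mul (hD _ ⟨_, rfl⟩) (mul_le_mul (hC _) (hC _) (norm_nonneg _) hC0)
      (by positivity) hD0
  have h := tendsto_tsum_of_dominated_convergence
    ((summable_zpow_mul_zpow_sq hQ0 hQ hz).norm.mul_right _) hlim hb
  rw [tsum_mul_right] at h
  exact h.congr fun N => (hasSum_finite_tripleProduct hQ0 hQ hz N).tsum_eq

lemma tendsto_prod_one_sub_odd_sq {x : ℂ} (hx0 : x ≠ 0) (hx : ‖x‖ < 1) :
    Tendsto (fun N => ∏ n ∈ Finset.range N, (1 - x ^ (2 * n + 1)) ^ 2) atTop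
      (𝓝 (alternatingTheta x * (eulerProd (x ^ 2))⁻¹)) := by
  refine (tendsto_tripleProduct hx0 hx (neg_ne_zero.mpr one_ne_zero)).congr fun N => ?_
  refine Finset.prod_congr rfl fun n _ => ?_
  rw [show (-1 : ℂ)⁻¹ = -1 by norm_num]
  ring

/-- The product expansion of the alternating theta series, in terms of Euler products. -/
lemma alternatingTheta_mul_eulerProd {x : ℂ} (hx0 : x ≠ 0) (hx : ‖x‖ < 1) :
    alternatingTheta x * eulerProd (x ^ 2) = eulerProd x ^ 2 := by
  have hx2 := norm_pow_lt_one hx two_ne_zero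
  have hsplit : ∀ N, eulerPartial x (2 * N) =
      (∏ n ∈ Finset.range N, (1 - x ^ (2 * n + 1))) * eulerPartial (x ^ 2) N := by
    intro N
    induction N with
    | zero => simp [eulerPartial]
    | succ N ih =>
      rw [eulerPartial, show 2 * (N + 1) = 2 * N + 1 + 1 by ring, Finset.prod_range_succ,
        Finset.prod_range_succ, ← eulerPartial, ih, eulerPartial, eulerPartial,
        Finset.prod_range_succ, Finset.prod_range_succ]
      ring
  have h1 : Tendsto (fun N : ℕ => eulerPartial x (2 * N) ^ 2) atTop (𝓝 (eulerProd x ^ 2)) :=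
    ((tendsto_eulerPartial hx).comp (tendsto_id.const_mul_atTop' two_pos)).pow 2
  have h2 := (tendsto_prod_one_sub_odd_sq hx0 hx).mul ((tendsto_eulerPartial hx2).pow 2)
  have h := tendsto_nhds_unique h1 (h2.congr fun N => by
    rw [hsplit, mul_pow, Finset.prod_pow])
  rw [h]
  field_simp [eulerProd_ne_zero hx2]

lemma alternatingTheta_ne_zero {x : ℂ} (hx0 : x ≠ 0) (hx : ‖x‖ < 1) : alternatingTheta x ≠ 0 := by
  intro h
  have := alternatingTheta_mul_eulerProd hx0 hx
  rw [h, zero_mul] at this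
  exact pow_ne_zero 2 (eulerProd_ne_zero hx) this.symm

/-- The product of the Euler product over the rotations by cube roots of unity. -/
lemma eulerProd_cube_rotations {x w : ℂ} (hx : ‖x‖ < 1) (hw : w ^ 2 + w + 1 = 0) :
    eulerProd x * eulerProd (w * x) * eulerProd (w ^ 2 * x) * eulerProd (x ^ 9) =
      eulerProd (x ^ 3) ^ 4 := by
  have hw3 : w ^ 3 = 1 := by linear_combination (w - 1) * hw
  have hwn : ‖w‖ = 1 := Complex.norm_eq_one_of_pow_eq_one hw3 three_ne_zero
  have hx1 : ‖w * x‖ < 1 := by simpa [hwn]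
  have hx2 : ‖w ^ 2 * x‖ < 1 := by simpa [hwn]
  have hpartial : ∀ N, eulerPartial x (3 * N) * eulerPartial (w * x) (3 * N) *
      eulerPartial (w ^ 2 * x) (3 * N) * eulerPartial (x ^ 9) N =
      eulerPartial (x ^ 3) (3 * N) * eulerPartial (x ^ 3) N ^ 3 := by
    intro N
    induction N with
    | zero => simp [eulerPartial]
    | succ N ih =>
      have hs : ∀ y, eulerPartial y (3 * (N + 1)) = eulerPartial y (3 * N) *
          ((1 - y ^ (3 * N + 1)) * (1 - y ^ (3 * N + 2)) * (1 - y ^ (3 * N + 3))) := fun y => by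
        rw [eulerPartial, show 3 * (N + 1) = 3 * N + 1 + 1 + 1 by ring, Finset.prod_range_succ,
          Finset.prod_range_succ, Finset.prod_range_succ, ← eulerPartial]
        ring
      have hs' : ∀ y, eulerPartial y (N + 1) = eulerPartial y N * (1 - y ^ (N + 1)) := fun y => by
        rw [eulerPartial, Finset.prod_range_succ, ← eulerPartial]
      have hwN : w ^ (3 * N) = 1 := by rw [pow_mul, hw3, one_pow]
      have hwN2 : (w ^ 2) ^ (3 * N) = 1 := by rw [← pow_mul, mul_comm 2, pow_mul, hwN, one_pow]
      have r : ∀ t : ℂ, (1 - t) * (1 - w * t) * (1 - w ^ 2 * t) = 1 - t ^ 3 := by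
        intro t
        linear_combination (-t + w * t ^ 2 - (w - 1) * t ^ 3) * hw
      have r1 : (1 - x ^ (3 * N + 1)) * (1 - (w * x) ^ (3 * N + 1)) *
          (1 - (w ^ 2 * x) ^ (3 * N + 1)) = 1 - (x ^ 3) ^ (3 * N + 1) := by
        rw [mul_pow, mul_pow, pow_succ w, pow_succ (w ^ 2), hwN, hwN2, one_mul, one_mul, r]
        ring
      have r2 : (1 - x ^ (3 * N + 2)) * (1 - (w * x) ^ (3 * N + 2)) *
          (1 - (w ^ 2 * x) ^ (3 * N + 2)) = 1 - (x ^ 3) ^ (3 * N + 2) := by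
        rw [mul_pow, mul_pow, pow_add w, pow_add (w ^ 2), hwN, hwN2, one_mul, one_mul,
          show (w ^ 2) ^ 2 = w by linear_combination w * hw3, mul_right_comm, r]
        ring
      have r3 : (w * x) ^ (3 * N + 3) = (x ^ 3) ^ (N + 1) := by
        rw [show 3 * N + 3 = 3 * (N + 1) by ring, pow_mul, mul_pow, hw3, one_mul]
      have r4 : (w ^ 2 * x) ^ (3 * N + 3) = (x ^ 3) ^ (N + 1) := by
        rw [show 3 * N + 3 = 3 * (N + 1) by ring, pow_mul, mul_pow, ← pow_mul, mul_comm 2, pow_mul,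
          hw3, one_pow, one_mul]
      have r5 : x ^ (3 * N + 3) = (x ^ 3) ^ (N + 1) := by
        rw [show 3 * N + 3 = 3 * (N + 1) by ring, pow_mul]
      have r6 : (x ^ 9) ^ (N + 1) = (x ^ 3) ^ (3 * N + 3) := by ring
      simp only [hs, hs']
      rw [r3, r4, r5, r6]
      calc _ = (eulerPartial x (3 * N) * eulerPartial (w * x) (3 * N) *
              eulerPartial (w ^ 2 * x) (3 * N) * eulerPartial (x ^ 9) N) *
            ((1 - x ^ (3 * N + 1)) * (1 - (w * x) ^ (3 * N + 1)) *
              (1 - (w ^ 2 * x) ^ (3 * N + 1))) *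
            ((1 - x ^ (3 * N + 2)) * (1 - (w * x) ^ (3 * N + 2)) *
              (1 - (w ^ 2 * x) ^ (3 * N + 2))) *
            ((1 - (x ^ 3) ^ (N + 1)) ^ 3 * (1 - (x ^ 3) ^ (3 * N + 3))) := by ring
        _ = _ := by rw [ih, r1, r2]; ring
  have h3 : Tendsto (fun N : ℕ => 3 * N) atTop atTop := tendsto_id.const_mul_atTop' three_pos
  have hxc := norm_pow_lt_one hx three_ne_zero
  have hl := ((((tendsto_eulerPartial hx).comp h3).mul ((tendsto_eulerPartial hx1).comp h3)).mul
    ((tendsto_eulerPartial hx2).comp h3)).mul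
    (tendsto_eulerPartial (norm_pow_lt_one hx (by norm_num : 9 ≠ 0)))
  have hr := ((tendsto_eulerPartial hxc).comp h3).mul ((tendsto_eulerPartial hxc).pow 3)
  rw [tendsto_nhds_unique (hl.congr hpartial) hr]
  ring

lemma alternatingTheta_cube_rotations {x w : ℂ} (hx0 : x ≠ 0) (hx : ‖x‖ < 1)
    (hw : w ^ 2 + w + 1 = 0) :
    alternatingTheta x * alternatingTheta (w * x) * alternatingTheta (w ^ 2 * x) *
      alternatingTheta (x ^ 9) = alternatingTheta (x ^ 3) ^ 4 := by
  have hw3 : w ^ 3 = 1 := by linear_combination (w - 1) * hw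
  have hw0 : w ≠ 0 := by rintro rfl; norm_num at hw3
  have hwn : ‖w‖ = 1 := Complex.norm_eq_one_of_pow_eq_one hw3 three_ne_zero
  have hx1 : ‖w * x‖ < 1 := by simpa [hwn]
  have hx2 : ‖w ^ 2 * x‖ < 1 := by simpa [hwn]
  have hxc := norm_pow_lt_one hx three_ne_zero
  have hx9 := norm_pow_lt_one hx (by norm_num : 9 ≠ 0)
  have hxs := norm_pow_lt_one hx two_ne_zero
  have hw2 : (w ^ 2) ^ 2 + w ^ 2 + 1 = 0 := by linear_combination (w ^ 2 - w + 1) * hw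
  have e1 := eulerProd_cube_rotations hx hw
  have e2 := eulerProd_cube_rotations hxs hw2
  have t0 := alternatingTheta_mul_eulerProd hx0 hx
  have t1 := alternatingTheta_mul_eulerProd (mul_ne_zero hw0 hx0) hx1
  have t2 := alternatingTheta_mul_eulerProd (mul_ne_zero (pow_ne_zero 2 hw0) hx0) hx2
  have t9 := alternatingTheta_mul_eulerProd (pow_ne_zero 9 hx0) hx9
  have t3 := alternatingTheta_mul_eulerProd (pow_ne_zero 3 hx0) hxc
  rw [mul_pow] at t1 t2
  rw [show (x ^ 9) ^ 2 = x ^ 18 by ring] at t9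
  rw [show (x ^ 3) ^ 2 = x ^ 6 by ring] at t3
  rw [show (x ^ 2) ^ 9 = x ^ 18 by ring, show (x ^ 2) ^ 3 = x ^ 6 by ring] at e2
  have hne : eulerProd (x ^ 6) ^ 4 ≠ 0 := pow_ne_zero 4 (eulerProd_ne_zero
    (norm_pow_lt_one hx (by norm_num)))
  refine mul_right_cancel₀ hne ?_
  rw [← mul_pow, t3, ← pow_mul, show 2 * 4 = 4 * 2 by rfl, pow_mul, ← e1, ← e2]
  simp only [mul_pow, ← t0, ← t1, ← t2, ← t9]
  ring

/-- The 3-dissection of the alternating theta series. -/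
lemma alternatingTheta_three_dissection {x : ℂ} (hx0 : x ≠ 0) (hx : ‖x‖ < 1) :
    alternatingTheta x =
      alternatingTheta (x ^ 9) - 2 * x * ∑' m : ℤ, (-(x ^ 6)) ^ m * (x ^ 9) ^ (m ^ 2) := by
  set f : ℤ → ℂ := fun m => (-1) ^ m * x ^ (m ^ 2) with hf
  have hsum : Summable f := summable_zpow_mul_zpow_sq hx0 hx (neg_ne_zero.mpr one_ne_zero)
  have hinj : ∀ r : ℤ, Function.Injective fun m : ℤ => 3 * m + r := fun r a b h => by
    simp only at h; omega
  have hg : Summable fun m : ℤ => (-(x ^ 6)) ^ m * (x ^ 9) ^ (m ^ 2) :=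
    summable_zpow_mul_zpow_sq (pow_ne_zero 9 hx0) (norm_pow_lt_one hx (by norm_num))
      (neg_ne_zero.mpr (pow_ne_zero 6 hx0))
  have hsplit : ∑' m, f m = ∑' m, f (3 * m + 0) + ∑' m, f (3 * m + 1) + ∑' m, f (3 * m + 2) := by
    have h := ((Equiv.prodComm (Fin 3) ℤ).trans (Int.divModEquiv 3).symm).hasSum_iff.mpr
      hsum.hasSum
    have h' := h.prod_fiberwise (g := fun b : Fin 3 => ∑' m, f (3 * m + (b : ℤ))) fun b => by
      refine (hsum.comp_injective (hinj b)).hasSum.congr_fun fun m => ?_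
      simp [Int.divModEquiv, mul_comm]
    rw [← h'.tsum_eq, tsum_fintype, Fin.sum_univ_three]
    simp
  have hsign : ∀ m : ℤ, (-1 : ℂ) ^ (3 * m) = (-1) ^ m := fun m => by
    rw [zpow_mul]; norm_num
  have hneg : ∀ m : ℤ, (-(x ^ 6)) ^ m = (-1) ^ m * x ^ (6 * m) := fun m => by
    rw [neg_eq_neg_one_mul, mul_zpow, zpow_mul]; norm_cast
  have hnine : ∀ m : ℤ, (x ^ 9) ^ m = x ^ (9 * m) := fun m => by
    rw [zpow_mul]; norm_cast
  have hm1 : (-1 : ℂ) ≠ 0 := neg_ne_zero.mpr one_ne_zero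
  have h0 : ∑' m, f (3 * m + 0) = alternatingTheta (x ^ 9) := by
    refine tsum_congr fun m => ?_
    simp only [hf, add_zero, hsign, hnine]
    congr 2; ring
  have h1 : ∑' m, f (3 * m + 1) = -x * ∑' m : ℤ, (-(x ^ 6)) ^ m * (x ^ 9) ^ (m ^ 2) := by
    rw [← tsum_mul_left]
    refine tsum_congr fun m => ?_
    simp only [hf, hneg, hnine]
    rw [zpow_add_one₀ hm1, hsign, show (3 * m + 1) ^ 2 = 1 + 6 * m + 9 * m ^ 2 by ring,
      zpow_add₀ hx0, zpow_add₀ hx0, zpow_one]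
    ring
  have h2 : ∑' m, f (3 * m + 2) = -x * ∑' m : ℤ, (-(x ^ 6)) ^ m * (x ^ 9) ^ (m ^ 2) := by
    rw [← tsum_mul_left, ← (Equiv.subLeft (-1 : ℤ)).tsum_eq]
    refine tsum_congr fun m => ?_
    simp only [hf, hneg, hnine, Equiv.subLeft_apply]
    rw [show 3 * (-1 - m) + 2 = -(3 * m + 1) by ring, zpow_neg, ← inv_zpow,
      show (-1 : ℂ)⁻¹ = -1 by norm_num, zpow_add_one₀ hm1, hsign,
      show (-(3 * m + 1)) ^ 2 = 1 + 6 * m + 9 * m ^ 2 by ring,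
      zpow_add₀ hx0, zpow_add₀ hx0, zpow_one]
    ring
  rw [show alternatingTheta x = ∑' m, f m from rfl, hsplit, h0, h1, h2]
  ring

/-- The infinite product occurring in the cubic continued fraction. -/
noncomputable def cubicProd (q : ℂ) : ℂ :=
  ∏' n : ℕ, ((1 - q ^ (6 * (n + 1) - 1)) * (1 - q ^ (6 * (n + 1) - 5)) /
    (1 - q ^ (6 * (n + 1) - 3)) ^ 2)

lemma tendsto_cubicProd {q : ℂ} (hq : ‖q‖ < 1) :
    Tendsto (fun N => ∏ n ∈ Finset.range N, ((1 - q ^ (6 * n + 5)) * (1 - q ^ (6 * n + 1)) /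
      (1 - q ^ (6 * n + 3)) ^ 2)) atTop (𝓝 (cubicProd q)) := by
  have h := fun b => multipliable_one_sub_pow_affine hq (by norm_num : 6 ≠ 0) b
  have h3 := tprod_one_sub_pow_affine_ne_zero hq (by norm_num : 6 ≠ 0) three_ne_zero
  have hm := (((h 5).mul (h 1)).div₀ ((h 3).pow 2) (by
    rw [(h 3).tprod_pow]; exact pow_ne_zero 2 h3)).hasProd.tendsto_prod_nat
  exact hm

/-- The cubic product expresses the ratio of theta series at the nomes `x` and `x ^ 9`. -/
lemma alternatingTheta_eq_mul_one_sub {x : ℂ} (hx0 : x ≠ 0) (hx : ‖x‖ < 1) :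
    alternatingTheta x = alternatingTheta (x ^ 9) * (1 - 2 * (x * cubicProd (x ^ 3))) := by
  have hx9 := norm_pow_lt_one hx (by norm_num : 9 ≠ 0)
  have hx90 : x ^ 9 ≠ 0 := pow_ne_zero 9 hx0
  have hE := eulerProd_ne_zero (norm_pow_lt_one hx9 two_ne_zero)
  have hT := alternatingTheta_ne_zero hx90 hx9
  have hnum := tendsto_tripleProduct hx90 hx9 (neg_ne_zero.mpr (pow_ne_zero 6 hx0))
  have hden := tendsto_prod_one_sub_odd_sq hx90 hx9
  have hq := hnum.div hden (mul_ne_zero hT (inv_ne_zero hE))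
  have hc := tendsto_nhds_unique
    (tendsto_cubicProd (norm_pow_lt_one hx three_ne_zero)) (hq.congr fun N => by
      rw [Pi.div_apply, ← Finset.prod_div_distrib]
      refine Finset.prod_congr rfl fun n _ => ?_
      congr 1
      · field_simp
        ring
      · ring)
  rw [alternatingTheta_three_dissection hx0 hx, hc, mul_div_mul_right _ _ (inv_ne_zero hE)]
  field_simp

/-- The product of `alternatingTheta_eq_mul_one_sub` over cube-root rotations, relating the nomes `x ^ 3` and
`x ^ 9`. -/
lemma alternatingTheta_pow_four {x : ℂ} (hx0 : x ≠ 0) (hx : ‖x‖ < 1) :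
    alternatingTheta (x ^ 3) ^ 4 =
      alternatingTheta (x ^ 9) ^ 4 * (1 - 8 * (x * cubicProd (x ^ 3)) ^ 3) := by
  obtain ⟨w, hw⟩ : ∃ w : ℂ, w ^ 2 + w + 1 = 0 := by
    have h := Complex.isPrimitiveRoot_exp 3 three_ne_zero
    have h' := h.geom_sum_eq_zero (by norm_num)
    simp only [Finset.sum_range_succ, Finset.sum_range_zero] at h'
    exact ⟨_, by linear_combination h'⟩
  have hw3 : w ^ 3 = 1 := by linear_combination (w - 1) * hw
  have hw0 : w ≠ 0 := by rintro rfl; norm_num at hw3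
  have hwn : ‖w‖ = 1 := Complex.norm_eq_one_of_pow_eq_one hw3 three_ne_zero
  have h0 := alternatingTheta_eq_mul_one_sub hx0 hx
  have h1 := alternatingTheta_eq_mul_one_sub (mul_ne_zero hw0 hx0)
    (show ‖w * x‖ < 1 by simpa [hwn])
  have h2 := alternatingTheta_eq_mul_one_sub (mul_ne_zero (pow_ne_zero 2 hw0) hx0)
    (show ‖w ^ 2 * x‖ < 1 by simpa [hwn])
  rw [show (w * x) ^ 9 = x ^ 9 by linear_combination (w ^ 6 + w ^ 3 + 1) * x ^ 9 * hw3,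
    show (w * x) ^ 3 = x ^ 3 by linear_combination x ^ 3 * hw3] at h1
  rw [show (w ^ 2 * x) ^ 9 = x ^ 9 by
      linear_combination (w ^ 15 + w ^ 12 + w ^ 9 + w ^ 6 + w ^ 3 + 1) * x ^ 9 * hw3,
    show (w ^ 2 * x) ^ 3 = x ^ 3 by linear_combination (w ^ 3 + 1) * x ^ 3 * hw3] at h2
  rw [← alternatingTheta_cube_rotations hx0 hx hw, h0, h1, h2]
  generalize cubicProd (x ^ 3) = p
  have r : ∀ t : ℂ, (1 - t) * (1 - w * t) * (1 - w ^ 2 * t) = 1 - t ^ 3 := fun t => by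
    linear_combination (-t + w * t ^ 2 - (w - 1) * t ^ 3) * hw
  linear_combination alternatingTheta (x ^ 9) ^ 4 * r (2 * (x * p))

/-- The modular equation relating the cubic continued fraction at the nomes `x ^ 3`, `x ^ 9`. -/
lemma cubicProd_modular_equation {x : ℂ} (hx0 : x ≠ 0) (hx : ‖x‖ < 1) :
    (x * cubicProd (x ^ 3)) ^ 3 * (4 * (x ^ 3 * cubicProd (x ^ 9)) ^ 2 +
      2 * (x ^ 3 * cubicProd (x ^ 9)) + 1) -
      x ^ 3 * cubicProd (x ^ 9) * ((x ^ 3 * cubicProd (x ^ 9)) ^ 2 -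
        x ^ 3 * cubicProd (x ^ 9) + 1) = 0 := by
  have hy0 : x ^ 3 ≠ 0 := pow_ne_zero 3 hx0
  have hy := norm_pow_lt_one hx three_ne_zero
  have h1 := alternatingTheta_eq_mul_one_sub hy0 hy
  have h2 := alternatingTheta_pow_four hx0 hx
  have h3 := alternatingTheta_pow_four hy0 hy
  have hT := alternatingTheta_ne_zero hy0 hy
  have hT' := alternatingTheta_ne_zero (pow_ne_zero 9 hy0)
    (norm_pow_lt_one hy (by norm_num : 9 ≠ 0))
  rw [show (x ^ 3) ^ 3 = x ^ 9 by ring] at h1 h3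
  rw [h1] at hT
  have hv := right_ne_zero_of_mul hT
  rw [h3, h1] at h2
  generalize x ^ 3 * cubicProd (x ^ 9) = v at *
  generalize x * cubicProd (x ^ 3) = u at *
  refine mul_left_cancel₀ (mul_ne_zero (pow_ne_zero 4 hT') hv) ?_
  linear_combination (1 / 8) * h2

/-- For `τ` in the upper half-plane, `x = c(τ)` and `y = c(3τ)` satisfy
`g(x,y) = x³(4y² + 2y + 1) − y(y² − y + 1) = 0`. -/
theorem cubicCF_triplication (τ : ℂ) (hτ : 0 < τ.im) :
    c τ ^ 3 * (4 * c (3 * τ) ^ 2 + 2 * c (3 * τ) + 1) -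
      c (3 * τ) * (c (3 * τ) ^ 2 - c (3 * τ) + 1) = 0 := by
  have hr : ‖Complex.exp (2 * Real.pi * I * τ / 3)‖ < 1 := by
    rw [Complex.norm_exp, Real.exp_lt_one_iff]
    have h : 2 * Real.pi * I * τ / 3 = ((2 * Real.pi / 3 : ℝ) : ℂ) * (I * τ) := by
      push_cast; ring
    rw [h, Complex.re_ofReal_mul, Complex.I_mul_re]
    have := mul_pos Real.pi_pos hτ
    linarith
  have e1 : nome τ = Complex.exp (2 * Real.pi * I * τ / 3) ^ 3 := by
    rw [nome, ← Complex.exp_nat_mul]; congr 1; push_cast; ring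
  have e2 : nome (3 * τ) = Complex.exp (2 * Real.pi * I * τ / 3) ^ 9 := by
    rw [nome, ← Complex.exp_nat_mul]; congr 1; push_cast; ring
  have e3 : Complex.exp (2 * Real.pi * I * (3 * τ) / 3) =
      Complex.exp (2 * Real.pi * I * τ / 3) ^ 3 := by
    rw [← Complex.exp_nat_mul]; congr 1; push_cast; ring
  have h := cubicProd_modular_equation (Complex.exp_ne_zero _) hr
  rw [c, c, e1, e2, e3]
  exact h
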